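/- The function d₂(x) = π₂(x) − C₂·Li₂(x) does not change sign on the interval [2^21, 2^25]: for all real x, y with 2^21 ≤ x ≤ y ≤ 2^25, one has d₂(x)·d₂(y) > 0. -/

import Mathlib

open Real Filter Set

/-- `Li₂(x) = ∫₂ˣ dt/(log t)²`. -/
noncomputable def Li2 (x : ℝ) : ℝ := ∫ t in (2:ℝ)..x, 1 / (Real.log t) ^ 2

/-- `π₂(x)`: the number of primes `p` with `p+2` also prime and `p+2 ≤ x`. -/
noncomputable def piTwin (x : ℝ) : ℕ :=
  Nat.card {p : ℕ | p.Prime ∧ (p + 2).Prime ∧ ((p : ℝ) + 2) ≤ x}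

/-- The twin prime constant `C₂ = 2·∏_{p prime, p>2} (1 − 1/(p−1)²)`. -/
noncomputable def C2 : ℝ :=
  2 * ∏' p : {p : ℕ // p.Prime ∧ 2 < p}, (1 - 1 / (((p : ℕ) : ℝ) - 1) ^ 2)

/-- `d₂(x) = π₂(x) − C₂·Li₂(x)`. -/
noncomputable def d2 (x : ℝ) : ℝ := (piTwin x : ℝ) - C2 * Li2 x

/-!
In fact `d₂` is positive on the whole interval. Cut the line into chunks `[1536 i, 1536 (i + 1))`.
On such a chunk `π₂` is at least the number of twin pairs `6k ± 1` with `k < 256 i`, and `C₂ * Li₂`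
is at most its value at `1536 (i + 1)`. The former is counted by a sieve whose state is one large
integer per window. The latter is bounded by a finite subproduct of `C₂`, all of whose factors are
at most `1`, and by the trapezoidal rule, which overestimates the integral of the convex function
`1 / log ^ 2`. Both sides are then integers, and the kernel compares them chunk by chunk.
-/

/-! ### Sieving twin primes with bitmaps -/

/-- Combines `f a, f (a + 1), …, f (a + 2 ^ t - 1)` with `op` along a balanced binary tree.
The tree shape keeps the recursion depth of kernel evaluation logarithmic in the block length. -/
def foldBlock {α : Type*} (op : α → α → α) (f : ℕ → α) : ℕ → ℕ → α
  | 0, a => f a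
  | t + 1, a => op (foldBlock op f t a) (foldBlock op f t (a + 2 ^ t))

theorem foldBlock_mul {M : Type*} [CommMonoid M] (f : ℕ → M) (t a : ℕ) :
    foldBlock (· * ·) f t a = ∏ n ∈ Finset.Ico a (a + 2 ^ t), f n := by
  induction t generalizing a with
  | zero => simp [foldBlock]
  | succ t ih =>
    rw [foldBlock, ih, ih, pow_succ, mul_two, ← add_assoc,
      Finset.prod_Ico_consecutive _ (Nat.le_add_right _ _) (Nat.le_add_right _ _)]

theorem testBit_foldBlock_or {f : ℕ → ℕ} {t a n i : ℕ} (hn : n ∈ Finset.Ico a (a + 2 ^ t))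
    (hi : (f n).testBit i) : (foldBlock (· ||| ·) f t a).testBit i := by
  induction t generalizing a with
  | zero =>
    obtain rfl : n = a := by simpa using hn
    exact hi
  | succ t ih =>
    rw [Finset.mem_Ico, pow_succ] at hn
    rw [foldBlock, Nat.testBit_or, Bool.or_eq_true]
    rcases lt_or_ge n (a + 2 ^ t) with h | h
    · exact Or.inl (ih (Finset.mem_Ico.mpr ⟨hn.1, h⟩))
    · exact Or.inr (ih (Finset.mem_Ico.mpr ⟨h, by omega⟩))

theorem prime_iff_coprime_factorial {n k : ℕ} (hk : k < n) (hn : n < (k + 1) ^ 2) (h1 : n ≠ 1) :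
    n.Prime ↔ n.Coprime k.factorial := by
  refine ⟨fun h ↦ h.coprime_factorial_of_lt hk, fun h ↦ ?_⟩
  have hmin : k < n.minFac := (Nat.coprime_factorial_iff h1).mp h
  by_contra hp
  have : n.minFac ^ 2 ≤ n := Nat.minFac_sq_le_self (by omega) hp
  have : (k + 1) ^ 2 ≤ n.minFac ^ 2 := by gcongr; omega
  omega

/-- Test for odd primality, valid below `6561 = 81 ^ 2`; it costs a single gcd with a factorial. -/
def isOddPrime (n : ℕ) : Bool :=
  2 < n && n.gcd (if n < 9 then 2 else if n < 81 then Nat.factorial 8 else Nat.factorial 80) == 1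

theorem isOddPrime_iff {n : ℕ} (hn : n < 6561) : isOddPrime n ↔ n.Prime ∧ 2 < n := by
  simp only [isOddPrime, Bool.and_eq_true, decide_eq_true_eq, beq_iff_eq,
    and_comm (a := n.Prime), and_congr_right_iff]
  intro h2
  split_ifs with h9 h81
  · exact (prime_iff_coprime_factorial h2 (by omega) (by omega)).symm
  · exact (prime_iff_coprime_factorial (by omega) (by omega) (by omega)).symm
  · exact (prime_iff_coprime_factorial (by omega) (by omega) (by omega)).symm

/-- The number whose binary digits up to `d * m` are set exactly at the positions `≡ ±e` modulo
`d`, for `e ≤ d`. -/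
def residueMask (d e m : ℕ) : ℕ :=
  let multiples := (2 ^ (d * m) - 1) / (2 ^ d - 1)
  multiples <<< e ||| multiples <<< (d - e)

theorem testBit_geomSum {d m i : ℕ} (hd : 0 < d) (hi : i < m) :
    ((2 ^ (d * m) - 1) / (2 ^ d - 1)).testBit (d * i) := by
  have h2 : 2 ≤ 2 ^ d := Nat.le_self_pow hd.ne' 2
  rw [pow_mul, ← Nat.geomSum_eq h2]
  induction m generalizing i with
  | zero => omega
  | succ m ih =>
    rw [geom_sum_succ, Nat.testBit_two_pow_mul_add _ (by omega)]
    rcases i with _ | i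
    · simp [hd]
    · rw [if_neg (by rw [mul_add]; omega), show d * (i + 1) - d = d * i by rw [mul_add]; omega]
      exact ih (by omega)

theorem testBit_residueMask {d e m n : ℕ} (he : 0 < e) (hed : e < d) (hn : n < d * m)
    (h : n ≡ e [MOD d] ∨ n ≡ d - e [MOD d]) : (residueMask d e m).testBit n := by
  have shifted {r : ℕ} (hr : r < d) (hnr : n ≡ r [MOD d]) :
      (((2 ^ (d * m) - 1) / (2 ^ d - 1)) <<< r).testBit n := by
    have hmod : n % d = r := Eq.trans hnr (Nat.mod_eq_of_lt hr)
    have hdiv : n = d * (n / d) + r := by rw [← hmod, Nat.div_add_mod]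
    rw [Nat.testBit_shiftLeft, show n - r = d * (n / d) by omega]
    simp only [testBit_geomSum (he.trans hed) (Nat.div_lt_of_lt_mul hn), Bool.and_true,
      decide_eq_true_eq]
    omega
  rw [residueMask, Nat.testBit_or, Bool.or_eq_true]
  exact h.imp (shifted hed) (shifted (by omega))

/-- `k` indexes the twin prime pair `6k - 1, 6k + 1`; every pair but `3, 5` is of this form. -/
def IsTwinIndex (k : ℕ) : Prop := (6 * k - 1).Prime ∧ (6 * k + 1).Prime

instance : DecidablePred IsTwinIndex := fun _ ↦ inferInstanceAs (Decidable (_ ∧ _))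

/-- Marks the offsets `j < W` such that the prime `d = 6e ± 1` divides one of `6(K + j) ± 1`. As
`(6e) ^ 2 ≡ 1` modulo `d`, this means `K + j ≡ ±e`. -/
def primeMask (K W e d : ℕ) : ℕ :=
  if isOddPrime d then residueMask d e (W / d + 2) >>> (K % d) else 0

/-- Marks the offsets `j < W` such that some prime `6e ± 1` with `e < 1024` divides one of
`6(K + j) ± 1`. -/
def sieve (K W : ℕ) : ℕ :=
  foldBlock (· ||| ·)
    (fun e ↦ primeMask K W e (6 * e - 1) ||| primeMask K W e (6 * e + 1)) 10 0

/-- Bitmap of the window `[K, K + W)` of twin indices: bit `j` is set when `K + j` survives the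
sieve. -/
def twinBits (K W : ℕ) : ℕ := (2 ^ W - 1) ^^^ (sieve K W % 2 ^ W)

theorem modEq_or_modEq_sub_of_dvd {p e k : ℕ} (hp : p.Prime) (h3 : 3 < p) (hep : e ≤ p)
    (he : (p : ℤ) ∣ (6 * e) ^ 2 - 1) (hk : (p : ℤ) ∣ (6 * k) ^ 2 - 1) :
    k ≡ e [MOD p] ∨ k ≡ p - e [MOD p] := by
  have hpZ : Prime (p : ℤ) := Nat.prime_iff_prime_int.mp hp
  have hcop : IsCoprime (p : ℤ) (6 ^ 2 : ℤ) := by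
    refine IsCoprime.pow_right (Nat.isCoprime_iff_coprime.mpr ?_)
    exact (Nat.coprime_primes hp Nat.prime_two).mpr (by omega) |>.mul_right
      ((Nat.coprime_primes hp Nat.prime_three).mpr (by omega))
  have hprod : (p : ℤ) ∣ (e - k) * (e + k) := by
    refine hcop.dvd_of_dvd_mul_left ?_
    convert dvd_sub he hk using 1
    ring
  rcases hpZ.dvd_or_dvd hprod with h | h
  · exact Or.inl (Nat.modEq_iff_dvd.mpr h)
  · refine Or.inr (Nat.modEq_iff_dvd.mpr ?_)
    rw [Nat.cast_sub hep, sub_sub]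
    exact dvd_sub dvd_rfl h

theorem testBit_primeMask {K W e j p : ℕ} (hp : p.Prime) (hpe : p = 6 * e - 1 ∨ p = 6 * e + 1)
    (he : e < 1024) (hj : j < W) (hK : 0 < K)
    (hdvd : p ∣ 6 * (K + j) - 1 ∨ p ∣ 6 * (K + j) + 1) : (primeMask K W e p).testBit j := by
  have hp2 := hp.two_le
  have int_dvd {k : ℕ} (hk : 0 < k) (h : p ∣ 6 * k - 1 ∨ p ∣ 6 * k + 1) :
      (p : ℤ) ∣ (6 * k) ^ 2 - 1 := by
    have hsq : ((6 * k : ℤ)) ^ 2 - 1 = (6 * k - 1 : ℕ) * (6 * k + 1 : ℕ) := by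
      push_cast [show 1 ≤ 6 * k by omega]; ring
    rw [hsq]
    exact h.elim (fun h ↦ (Int.natCast_dvd_natCast.mpr h).mul_right _)
      (fun h ↦ (Int.natCast_dvd_natCast.mpr h).mul_left _)
  have hres : K + j ≡ e [MOD p] ∨ K + j ≡ p - e [MOD p] :=
    modEq_or_modEq_sub_of_dvd hp (by omega) (by omega)
      (int_dvd (by omega) (hpe.imp Eq.dvd Eq.dvd)) (int_dvd (by omega) hdvd)
  have hwindow : K % p + j ≡ K + j [MOD p] := (Nat.mod_modEq K p).add_right j
  have hlt : K % p + j < p * (W / p + 2) := by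
    have := Nat.mod_lt K hp.pos
    have := Nat.lt_mul_div_succ W hp.pos
    rw [mul_add, mul_one] at this
    rw [mul_add]
    omega
  rw [primeMask, if_pos ((isOddPrime_iff (by omega)).mpr ⟨hp, by omega⟩), Nat.testBit_shiftRight]
  exact testBit_residueMask (by omega) (by omega) hlt (hres.imp hwindow.trans hwindow.trans)

theorem prime_of_not_testBit_sieve {K W j n : ℕ} (hK : 0 < K) (hj : j < W)
    (hn : n = 6 * (K + j) - 1 ∨ n = 6 * (K + j) + 1) (hlt : n < 6143 ^ 2)
    (hbit : (sieve K W).testBit j = false) : n.Prime := by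
  by_contra hnp
  have hp : n.minFac.Prime := Nat.minFac_prime (by omega)
  have hdvd : n.minFac ∣ n := Nat.minFac_dvd n
  have hsq : n.minFac ^ 2 ≤ n := Nat.minFac_sq_le_self (by omega) hnp
  have hsmall : n.minFac < 6143 := lt_of_pow_lt_pow_left₀ 2 (by omega) (hsq.trans_lt hlt)
  obtain ⟨e, hpe⟩ : ∃ e, n.minFac = 6 * e - 1 ∨ n.minFac = 6 * e + 1 := by
    have h2 : ¬ 2 ∣ n.minFac := fun h ↦ by have := h.trans hdvd; omega
    have h3 : ¬ 3 ∣ n.minFac := fun h ↦ by have := h.trans hdvd; omega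
    exact ⟨(n.minFac + 1) / 6, by omega⟩
  have hmask := testBit_primeMask hp hpe (by omega) hj hK
    (hn.imp (fun h ↦ hdvd.trans h.dvd) (fun h ↦ hdvd.trans h.dvd))
  refine absurd (testBit_foldBlock_or (n := e) (by simp; omega) ?_) (Bool.eq_false_iff.mp hbit)
  rw [Nat.testBit_or, Bool.or_eq_true]
  exact hpe.imp (fun h ↦ by rwa [← h]) (fun h ↦ by rwa [← h])

theorem isTwinIndex_of_testBit_twinBits {K W j : ℕ} (hK : 0 < K) (hKW : 6 * (K + W) < 6143 ^ 2)
    (h : (twinBits K W).testBit j) : IsTwinIndex (K + j) := by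
  rw [twinBits, Nat.testBit_xor, Nat.testBit_two_pow_sub_one, Nat.testBit_mod_two_pow] at h
  have hj : j < W := by
    by_contra hj
    simp [hj] at h
  simp only [hj, decide_true, Bool.true_and, Bool.true_xor, Bool.not_eq_true'] at h
  exact ⟨prime_of_not_testBit_sieve hK hj (Or.inl rfl) (by omega) h,
    prime_of_not_testBit_sieve hK hj (Or.inr rfl) (by omega) h⟩

/-- Number of binary ones of `w`, truncated at `fuel`: each step clears the lowest one. -/
def popcount : ℕ → ℕ → ℕ
  | 0, _ => 0
  | fuel + 1, w => if w = 0 then 0 else popcount fuel (w &&& (w - 1)) + 1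

theorem popcount_le_card {s : Finset ℕ} {fuel w : ℕ} (h : ∀ j, w.testBit j → j ∈ s) :
    popcount fuel w ≤ s.card := by
  induction fuel generalizing w s with
  | zero => exact Nat.zero_le _
  | succ fuel ih =>
    rw [popcount]
    split_ifs with hw
    · exact Nat.zero_le _
    have hne : w &&& (w - 1) ≠ w := by
      have : w &&& (w - 1) ≤ w - 1 := Nat.and_le_right
      omega
    obtain ⟨i, hi⟩ := Nat.exists_testBit_ne_of_ne hne
    have hcleared : (w &&& (w - 1)).testBit i = false ∧ w.testBit i = true := by
      rw [Nat.testBit_and] at hi ⊢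
      cases hwi : w.testBit i <;> simp_all
    have hsub : ∀ j, (w &&& (w - 1)).testBit j → j ∈ s.erase i := by
      intro j hj
      refine Finset.mem_erase.mpr ⟨?_, h j ?_⟩
      · rintro rfl
        simp [hcleared.1] at hj
      · rw [Nat.testBit_and, Bool.and_eq_true] at hj
        exact hj.1
    rw [← Finset.card_erase_add_one (h i hcleared.2)]
    exact Nat.add_le_add_right (ih hsub) 1

theorem count_add_popcount_le {P : ℕ → Prop} [DecidablePred P] {a B w : ℕ} (fuel : ℕ)
    (hw : ∀ j, w.testBit j → P (a + j)) :
    Nat.count P a + popcount fuel (w % 2 ^ B) ≤ Nat.count P (a + B) := by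
  rw [Nat.count_add, Nat.count_eq_card_filter_range (fun j ↦ P (a + j))]
  refine Nat.add_le_add_left (popcount_le_card fun j hj ↦ ?_) _
  rw [Nat.testBit_mod_two_pow, Bool.and_eq_true, decide_eq_true_eq] at hj
  exact Finset.mem_filter.mpr ⟨Finset.mem_range.mpr hj.1, hw j hj.2⟩

theorem finite_twin_primes_le (x : ℝ) :
    {p : ℕ | p.Prime ∧ (p + 2).Prime ∧ ((p : ℝ) + 2) ≤ x}.Finite :=
  (Set.finite_Iic ⌊x⌋₊).subset fun _ hp ↦ Nat.le_floor (by linarith [hp.2.2])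

theorem count_isTwinIndex_le_piTwin {K : ℕ} {x : ℝ} (hx : 6 * (K : ℝ) ≤ x) :
    Nat.count IsTwinIndex K ≤ piTwin x := by
  rw [Nat.count_eq_card_filter_range, ← Set.ncard_coe_finset, piTwin, Nat.card_coe_set_eq]
  refine Set.ncard_le_ncard_of_injOn (fun k ↦ 6 * k - 1) ?_ ?_ (finite_twin_primes_le x)
  · intro k hk
    obtain ⟨hkK, hsmaller, hlarger⟩ := Finset.mem_filter.mp hk
    rw [Finset.mem_range] at hkK
    have hpos := hsmaller.two_le
    have hsucc : 6 * k - 1 + 2 = 6 * k + 1 := by omega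
    refine ⟨hsmaller, hsucc ▸ hlarger, le_trans ?_ hx⟩
    exact_mod_cast (by omega : 6 * k - 1 + 2 ≤ 6 * K)
  · intro a ha b hb hab
    have := (Finset.mem_filter.mp ha).2.1.two_le
    have := (Finset.mem_filter.mp hb).2.1.two_le
    dsimp only at hab
    omega

/-! ### Upper bound for the twin prime constant -/

section TwinPrimeConstant

variable {p : ℕ}

theorem twinFactor_nonneg (hp : 2 < p) : 0 ≤ 1 - 1 / ((p : ℝ) - 1) ^ 2 := by
  have h3 : (3 : ℝ) ≤ p := by exact_mod_cast hp
  rw [sub_nonneg]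
  exact div_le_one_of_le₀ (by nlinarith) (sq_nonneg _)

theorem twinFactor_le_one : 1 - 1 / ((p : ℝ) - 1) ^ 2 ≤ 1 :=
  sub_le_self _ (by positivity)

theorem twinFactor_eq_div (hp : 2 < p) :
    1 - 1 / ((p : ℝ) - 1) ^ 2 = ((p * (p - 2) : ℕ) : ℝ) / (((p - 1) ^ 2 : ℕ) : ℝ) := by
  have h1 : (p : ℝ) - 1 ≠ 0 := sub_ne_zero.mpr (by norm_cast; omega)
  push_cast [show 1 ≤ p by omega, show 2 ≤ p by omega]
  field_simp
  ring

theorem multipliable_twinFactor :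
    Multipliable fun p : {p : ℕ // p.Prime ∧ 2 < p} ↦ 1 - 1 / (((p : ℕ) : ℝ) - 1) ^ 2 := by
  have hsum : Summable fun p : {p : ℕ // p.Prime ∧ 2 < p} ↦ 1 / (((p : ℕ) : ℝ) - 1) ^ 2 := by
    have hinj : Function.Injective fun p : {p : ℕ // p.Prime ∧ 2 < p} ↦ (p : ℕ) - 1 := by
      rintro ⟨a, -, ha⟩ ⟨b, -, hb⟩ (hab : a - 1 = b - 1)
      exact Subtype.ext (by omega : a = b)
    refine ((Real.summable_one_div_nat_pow.mpr one_lt_two).comp_injective hinj).congr fun p ↦ ?_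
    simp [Nat.cast_pred (show 0 < (p : ℕ) by have := p.2.2; omega)]
  simpa only [sub_eq_add_neg] using Real.multipliable_one_add_of_summable hsum.neg

theorem C2_le_prod {s : Finset ℕ} (hs : ∀ p ∈ s, p.Prime ∧ 2 < p) :
    C2 ≤ 2 * ∏ p ∈ s, (1 - 1 / ((p : ℝ) - 1) ^ 2) := by
  rw [C2, ← Finset.prod_subtype_of_mem _ hs]
  refine mul_le_mul_of_nonneg_left ?_ zero_le_two
  refine le_of_tendsto multipliable_twinFactor.hasProd ?_
  filter_upwards [eventually_ge_atTop (s.subtype _)] with t ht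
  exact Finset.prod_le_prod_of_subset_of_le_one ht (fun p _ ↦ twinFactor_nonneg p.2.2)
    fun _ _ _ ↦ twinFactor_le_one

/-- The product of `f` over the odd primes below `4096`. -/
def oddPrimeProd (f : ℕ → ℕ) : ℕ :=
  foldBlock (· * ·) (fun n ↦ if isOddPrime n then f n else 1) 12 0

theorem oddPrimeProd_eq_prod (f : ℕ → ℕ) :
    oddPrimeProd f = ∏ p ∈ Finset.range 4096 with p.Prime ∧ 2 < p, f p := by
  rw [oddPrimeProd, foldBlock_mul, Finset.prod_filter, zero_add, Finset.range_eq_Ico]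
  refine Finset.prod_congr rfl fun n hn ↦ ?_
  simp only [isOddPrime_iff (show n < 6561 by have := (Finset.mem_Ico.mp hn).2; omega)]

theorem C2_le : C2 ≤ 13204 / 10000 := by
  have hcert : 20000 * oddPrimeProd (fun p ↦ p * (p - 2)) ≤
      13204 * oddPrimeProd (fun p ↦ (p - 1) ^ 2) := by decide +kernel
  rw [oddPrimeProd_eq_prod, oddPrimeProd_eq_prod] at hcert
  set s : Finset ℕ := {p ∈ Finset.range 4096 | p.Prime ∧ 2 < p}
  have hs : ∀ p ∈ s, p.Prime ∧ 2 < p := fun p hp ↦ (Finset.mem_filter.mp hp).2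
  have hpos : (0 : ℝ) < ((∏ p ∈ s, (p - 1) ^ 2 : ℕ) : ℝ) := by
    exact_mod_cast Finset.prod_pos fun p hp ↦ pow_pos (by have := (hs p hp).2; omega) 2
  calc C2 ≤ 2 * ∏ p ∈ s, (1 - 1 / ((p : ℝ) - 1) ^ 2) := C2_le_prod hs
    _ = 2 * ((∏ p ∈ s, p * (p - 2) : ℕ) : ℝ) / ((∏ p ∈ s, (p - 1) ^ 2 : ℕ) : ℝ) := by
      rw [Finset.prod_congr rfl fun p hp ↦ twinFactor_eq_div (hs p hp).2, Finset.prod_div_distrib,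
        Nat.cast_prod, Nat.cast_prod, mul_div_assoc]
    _ ≤ 13204 / 10000 := by
      rw [div_le_div_iff₀ hpos (by norm_num)]
      have : (20000 : ℝ) * ((∏ p ∈ s, p * (p - 2) : ℕ) : ℝ) ≤
        13204 * ((∏ p ∈ s, (p - 1) ^ 2 : ℕ) : ℝ) := by exact_mod_cast hcert
      linarith

end TwinPrimeConstant

/-! ### Upper bound for the logarithmic integral -/

theorem intervalIntegral_le_trapezoid_of_convexOn {f : ℝ → ℝ} {a b : ℝ} (hab : a < b)
    (hf : ConvexOn ℝ (Icc a b) f) (hint : IntervalIntegrable f MeasureTheory.volume a b) :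
    ∫ t in a..b, f t ≤ (b - a) * (f a + f b) / 2 := by
  have hba : b - a ≠ 0 := (sub_pos.mpr hab).ne'
  have hchord : ∀ t ∈ Icc a b, f t ≤ f a + (f b - f a) / (b - a) * (t - a) := by
    intro t ht
    have := hf.2 (left_mem_Icc.mpr hab.le) (right_mem_Icc.mpr hab.le)
      (div_nonneg (sub_nonneg.mpr ht.2) (sub_pos.mpr hab).le)
      (div_nonneg (sub_nonneg.mpr ht.1) (sub_pos.mpr hab).le) (by field_simp; ring)
    simp only [smul_eq_mul] at this
    rw [show (b - t) / (b - a) * a + (t - a) / (b - a) * b = t by field_simp; ring] at this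
    refine this.trans_eq ?_
    field_simp
    ring
  calc ∫ t in a..b, f t ≤ ∫ t in a..b, (f a + (f b - f a) / (b - a) * (t - a)) :=
        intervalIntegral.integral_mono_on hab.le hint
          (Continuous.intervalIntegrable (by fun_prop) _ _) hchord
    _ = (b - a) * (f a + f b) / 2 := by
      rw [intervalIntegral.integral_add (by simp)
        (Continuous.intervalIntegrable (by fun_prop) _ _), intervalIntegral.integral_const_mul,
        intervalIntegral.integral_sub (by simp) (by simp)]
      simp only [intervalIntegral.integral_const, integral_id, smul_eq_mul]
      field_simp
      ring

theorem convexOn_one_div_log_sq : ConvexOn ℝ (Ioi 1) fun t ↦ 1 / log t ^ 2 := by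
  have himage : log '' Ioi 1 = Ioi 0 := by
    refine Subset.antisymm (image_subset_iff.mpr fun t ht ↦ log_pos ht) fun y hy ↦ ?_
    exact ⟨exp y, one_lt_exp_iff.mpr hy, log_exp y⟩
  have hconvex : ConvexOn ℝ (Ioi 0) fun y : ℝ ↦ 1 / y ^ 2 :=
    (convexOn_zpow (-2)).congr fun y _ ↦ by simp [zpow_neg]
  have hanti : AntitoneOn (fun y : ℝ ↦ 1 / y ^ 2) (Ioi 0) := by
    intro x hx y _ hxy
    have : 0 < x := hx
    dsimp only
    gcongr
  exact (himage ▸ hconvex).comp_concaveOn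
    (strictConcaveOn_log_Ioi.concaveOn.subset (Ioi_subset_Ioi zero_le_one) (convex_Ioi 1))
    (himage ▸ hanti)

theorem antitoneOn_one_div_log_sq : AntitoneOn (fun t ↦ 1 / log t ^ 2) (Ioi 1) := by
  intro a ha b _ hab
  have := log_pos ha
  have := log_le_log (zero_lt_one.trans ha) hab
  dsimp only
  gcongr

theorem continuousOn_one_div_log_sq : ContinuousOn (fun t ↦ 1 / log t ^ 2) (Ioi 1) :=
  continuousOn_const.div ((continuousOn_log.mono fun t ht ↦ by
    simpa using (zero_lt_one.trans ht).ne').pow 2) fun t ht ↦ (pow_pos (log_pos ht) 2).ne'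

theorem intervalIntegrable_one_div_log_sq {a b : ℝ} (ha : 1 < a) (hb : 1 < b) :
    IntervalIntegrable (fun t ↦ 1 / log t ^ 2) MeasureTheory.volume a b :=
  (continuousOn_one_div_log_sq.mono fun _ ht ↦
    lt_of_lt_of_le (lt_min ha hb) ht.1).intervalIntegrable

theorem Li2_sub_Li2 {a b : ℝ} (ha : 1 < a) (hb : 1 < b) :
    Li2 b - Li2 a = ∫ t in a..b, 1 / log t ^ 2 :=
  intervalIntegral.integral_interval_sub_left
    (intervalIntegrable_one_div_log_sq one_lt_two hb)
    (intervalIntegrable_one_div_log_sq one_lt_two ha)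

theorem monotoneOn_Li2 : MonotoneOn Li2 (Ioi 1) := by
  intro a ha b hb hab
  rw [← sub_nonneg, Li2_sub_Li2 ha hb]
  exact intervalIntegral.integral_nonneg hab fun t _ ↦ by positivity

theorem Li2_sub_Li2_le_left {a b : ℝ} (ha : 1 < a) (hab : a ≤ b) :
    Li2 b - Li2 a ≤ (b - a) * (1 / log a ^ 2) := by
  have hb := ha.trans_le hab
  rw [Li2_sub_Li2 ha hb, ← smul_eq_mul, ← intervalIntegral.integral_const]
  exact intervalIntegral.integral_mono_on hab (intervalIntegrable_one_div_log_sq ha hb) (by simp)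
    fun t ht ↦ antitoneOn_one_div_log_sq ha (ha.trans_le ht.1) ht.1

theorem Li2_sub_Li2_le_trapezoid {a b : ℝ} (ha : 1 < a) (hab : a < b) :
    Li2 b - Li2 a ≤ (b - a) * (1 / log a ^ 2 + 1 / log b ^ 2) / 2 := by
  rw [Li2_sub_Li2 ha (ha.trans hab)]
  exact intervalIntegral_le_trapezoid_of_convexOn hab
    (convexOn_one_div_log_sq.subset (fun t ht ↦ ha.trans_le ht.1) (convex_Icc a b))
    (intervalIntegrable_one_div_log_sq ha (ha.trans hab))

/-- The integration nodes: `64` equally spaced points in each interval `[2 ^ i, 2 ^ (i + 1))`,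
`i ≥ 1`. -/
noncomputable def node (m : ℕ) : ℝ := 2 ^ (m / 64 + 1) * ((64 + (m % 64 : ℕ)) / 64)

theorem one_lt_node (m : ℕ) : 1 < node m := by
  have h2 : (2 : ℝ) ≤ 2 ^ (m / 64 + 1) := le_self_pow₀ one_le_two (Nat.succ_ne_zero _)
  have h1 : (1 : ℝ) ≤ (64 + (m % 64 : ℕ)) / 64 := by
    rw [one_le_div (by norm_num)]
    exact le_add_of_nonneg_right (Nat.cast_nonneg _)
  rw [node]
  nlinarith

theorem node_succ_sub_node (m : ℕ) : node (m + 1) - node m = 2 ^ (m / 64) / 32 := by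
  rw [node, node]
  by_cases h : m % 64 = 63
  · rw [show (m + 1) / 64 = m / 64 + 1 by omega, show (m + 1) % 64 = 0 by omega, h]
    push_cast
    ring
  · rw [show (m + 1) / 64 = m / 64 by omega, show (m + 1) % 64 = m % 64 + 1 by omega]
    push_cast
    ring

/-- An integer lower bound for `10 ^ 12 * log ((64 + r) / 64)`, adding up the bounds
`log (1 + 1 / n) ≥ 2 / (2 * n + 1)`. -/
def logLower : ℕ → ℕ
  | 0 => 0
  | r + 1 => logLower r + 2 * 10 ^ 12 / (129 + 2 * r)

theorem logLower_le (r : ℕ) : (logLower r : ℝ) ≤ 10 ^ 12 * log ((64 + r) / 64) := by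
  induction r with
  | zero => simp [logLower]
  | succ r ih =>
    have hfactor : ((64 + (r + 1 : ℕ)) / 64 : ℝ) = (64 + r) / 64 * (1 + 1 / (64 + r)) := by
      push_cast
      field_simp
      ring
    have hstep : 2 / (129 + 2 * r : ℝ) ≤ log (1 + 1 / (64 + r)) := by
      refine le_trans (le_of_eq ?_) (le_log_one_add_of_nonneg (by positivity))
      field_simp
      ring
    have hdiv : ((2 * 10 ^ 12 / (129 + 2 * r) : ℕ) : ℝ) ≤ 10 ^ 12 * (2 / (129 + 2 * r)) :=
      Nat.cast_div_le.trans_eq (by push_cast; ring)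
    rw [logLower, Nat.cast_add, hfactor, log_mul (by positivity) (by positivity)]
    linarith

/-- An integer lower bound for `10 ^ 12 * log (node m)`; the constant is `10 ^ 12 * log 2`
rounded down. -/
def logNodeLower (m : ℕ) : ℕ := (m / 64 + 1) * 693147180300 + logLower (m % 64)

theorem logNodeLower_le (m : ℕ) : (logNodeLower m : ℝ) ≤ 10 ^ 12 * log (node m) := by
  have hlog2 : (693147180300 : ℝ) ≤ 10 ^ 12 * log 2 := by linarith [log_two_gt_d9]
  rw [node, log_mul (by positivity) (by positivity), log_pow, logNodeLower]
  calc (((m / 64 + 1) * 693147180300 + logLower (m % 64) : ℕ) : ℝ)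
      = ((m / 64 + 1 : ℕ) : ℝ) * 693147180300 + logLower (m % 64) := by norm_cast
    _ ≤ ((m / 64 + 1 : ℕ) : ℝ) * (10 ^ 12 * log 2) +
        10 ^ 12 * log ((64 + (m % 64 : ℕ)) / 64) := by
      gcongr
      exact logLower_le _
    _ = _ := by ring

/-- An integer upper bound for `10 ^ 12 / log (node m) ^ 2`. -/
def invLogSqUpper (m : ℕ) : ℕ := 10 ^ 36 / logNodeLower m ^ 2 + 1

theorem le_invLogSqUpper (m : ℕ) : 10 ^ 12 * (1 / log (node m) ^ 2) ≤ invLogSqUpper m := by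
  have hB : (0 : ℝ) < logNodeLower m := by
    rw [logNodeLower]
    positivity
  have hlog : 0 < log (node m) := log_pos (one_lt_node m)
  calc 10 ^ 12 * (1 / log (node m) ^ 2)
      = 10 ^ 36 / (10 ^ 12 * log (node m)) ^ 2 := by
        field_simp
    _ ≤ 10 ^ 36 / (logNodeLower m : ℝ) ^ 2 := by
        gcongr
        exact logNodeLower_le m
    _ ≤ invLogSqUpper m := by
        rw [div_le_iff₀ (by positivity)]
        have hBpos : 0 < logNodeLower m ^ 2 := pow_pos (by exact_mod_cast hB) 2
        rw [mul_comm]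
        exact_mod_cast (Nat.lt_mul_div_succ (10 ^ 36) hBpos).le

/-- An integer upper bound for `64 * 10 ^ 12 * Li2 (node m)`, from the trapezoidal rule. -/
def trapezoidSum : ℕ → ℕ
  | 0 => 0
  | m + 1 => trapezoidSum m + 2 ^ (m / 64) * (invLogSqUpper m + invLogSqUpper (m + 1))

theorem Li2_node_le_trapezoidSum (m : ℕ) : 64 * 10 ^ 12 * Li2 (node m) ≤ trapezoidSum m := by
  induction m with
  | zero => simp [node, Li2, trapezoidSum]
  | succ m ih =>
    have hlt : node m < node (m + 1) := by
      rw [← sub_pos, node_succ_sub_node]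
      positivity
    have hstep := Li2_sub_Li2_le_trapezoid (one_lt_node m) hlt
    rw [node_succ_sub_node] at hstep
    have hvalues : (2 : ℝ) ^ (m / 64) * (10 ^ 12 * (1 / log (node m) ^ 2) +
        10 ^ 12 * (1 / log (node (m + 1)) ^ 2)) ≤
        2 ^ (m / 64) * (invLogSqUpper m + invLogSqUpper (m + 1)) := by
      gcongr <;> exact le_invLogSqUpper _
    rw [trapezoidSum]
    push_cast
    linarith

/-- An integer upper bound for `64 * 10 ^ 12 * Li2 X`, `64 ≤ X`: the trapezoidal bound at the last
node `X / 2 ^ t * 2 ^ t` before `X`, and the value of the integrand there up to `X`. -/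
def liUpper (X : ℕ) : ℕ :=
  let t := X.log2 - 6
  let m := 64 * t + X / 2 ^ t + 256
  trapezoidSum m + 64 * (X % 2 ^ t) * invLogSqUpper m

theorem node_eq_div_mul {t X : ℕ} (h64 : 64 ≤ X / 2 ^ t) (h128 : X / 2 ^ t < 128) :
    node (64 * t + X / 2 ^ t + 256) = ((X / 2 ^ t * 2 ^ t : ℕ) : ℝ) := by
  rw [node, show (64 * t + X / 2 ^ t + 256) / 64 + 1 = t + 6 by omega,
    show (64 * t + X / 2 ^ t + 256) % 64 = X / 2 ^ t - 64 by omega]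
  push_cast [h64]
  ring

theorem Li2_le_liUpper {X : ℕ} (hX : 64 ≤ X) : 64 * 10 ^ 12 * Li2 X ≤ liUpper X := by
  have hX0 : X ≠ 0 := by omega
  have hlog : 6 ≤ X.log2 := (Nat.le_log2 hX0).mpr hX
  simp only [liUpper]
  obtain ⟨t, ht⟩ : ∃ t, X.log2 = t + 6 := ⟨X.log2 - 6, by omega⟩
  rw [show X.log2 - 6 = t by omega]
  have h64 : 64 ≤ X / 2 ^ t := by
    rw [Nat.le_div_iff_mul_le (Nat.two_pow_pos t), show 64 * 2 ^ t = 2 ^ (t + 6) by ring]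
    exact (Nat.le_log2 hX0).mp ht.ge
  have h128 : X / 2 ^ t < 128 := by
    rw [Nat.div_lt_iff_lt_mul (Nat.two_pow_pos t), show 128 * 2 ^ t = 2 ^ (t + 6 + 1) by ring]
    exact (Nat.log2_lt hX0).mp (by omega)
  have hnode := node_eq_div_mul h64 h128
  set m := 64 * t + X / 2 ^ t + 256
  have hsub : (X : ℝ) - node m = (X % 2 ^ t : ℕ) := by
    rw [hnode, sub_eq_iff_eq_add]
    exact_mod_cast (Nat.mod_add_div' X (2 ^ t)).symm
  have htail := Li2_sub_Li2_le_left (one_lt_node m) (sub_nonneg.mp (hsub ▸ Nat.cast_nonneg _))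
  rw [hsub] at htail
  have hvalue : ((X % 2 ^ t : ℕ) : ℝ) * (10 ^ 12 * (1 / log (node m) ^ 2)) ≤
      (X % 2 ^ t : ℕ) * invLogSqUpper m := by
    gcongr
    exact le_invLogSqUpper m
  have hmain := Li2_node_le_trapezoidSum m
  rw [Nat.cast_add, Nat.cast_mul, Nat.cast_mul, Nat.cast_ofNat]
  linarith

/-! ### Comparison chunk by chunk -/

/-- The certificate that `d2` is positive on every chunk `[1536 * i, 1536 * (i + 1))` with
`1365 ≤ i < c`: the twin indices below `256 * i` outnumber the bound for `C2 * Li2` at the right end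
of the chunk. The number `cnt` is a lower bound for the twin indices below `256 * c`, from which the
certificate can be extended. -/
structure CertifiedBelow (c cnt : ℕ) : Prop where
  le_count : cnt ≤ Nat.count IsTwinIndex (256 * c)
  lt_count : ∀ i, 1365 ≤ i → i < c →
    13204 * liUpper (1536 * (i + 1)) < 64 * 10 ^ 16 * Nat.count IsTwinIndex (256 * i)

/-- Reads `n` blocks of `256` bits off the bitmap `S`, the first one for chunk `c`, adding their
digit sums to `cnt`; fails as soon as the running count is too small to certify its chunk. -/
def scanChunks : ℕ → ℕ → ℕ → ℕ → Option ℕ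
  | 0, _, _, cnt => some cnt
  | n + 1, S, c, cnt =>
    if c < 1365 ∨ 13204 * liUpper (1536 * (c + 1)) < 64 * 10 ^ 16 * cnt then
      scanChunks n (S >>> 256) (c + 1) (cnt + popcount 256 (S % 2 ^ 256))
    else none

theorem CertifiedBelow.of_scanChunks {n S c cnt cnt' : ℕ} (h : CertifiedBelow c cnt)
    (hS : ∀ j, S.testBit j → IsTwinIndex (256 * c + j)) (hscan : scanChunks n S c cnt = some cnt') :
    CertifiedBelow (c + n) cnt' := by
  induction n generalizing S c cnt with
  | zero =>
    obtain rfl : cnt = cnt' := by simpa [scanChunks] using hscan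
    exact h
  | succ n ih =>
    rw [scanChunks, Option.ite_none_right_eq_some] at hscan
    obtain ⟨hcheck, hscan⟩ := hscan
    have hnext : CertifiedBelow (c + 1) (cnt + popcount 256 (S % 2 ^ 256)) := by
      refine ⟨(Nat.add_le_add_right h.le_count _).trans (count_add_popcount_le 256 hS), ?_⟩
      intro i hi hic
      rcases Nat.lt_succ_iff_lt_or_eq.mp hic with hic | rfl
      · exact h.lt_count i hi hic
      · have hlt := hcheck.resolve_left hi.not_gt
        exact hlt.trans_le (Nat.mul_le_mul_left _ h.le_count)
    rw [show c + (n + 1) = c + 1 + n by ring]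
    refine ih hnext (fun j hj ↦ ?_) hscan
    rw [Nat.testBit_shiftRight] at hj
    rw [show 256 * (c + 1) + j = 256 * c + (256 + j) by ring]
    exact hS _ hj

theorem CertifiedBelow.extend {n c cnt cnt' : ℕ} (h : CertifiedBelow c cnt) (hc : 0 < c)
    (hn : 1536 * (c + n) < 6143 ^ 2)
    (hscan : scanChunks n (twinBits (256 * c) (256 * n)) c cnt = some cnt') :
    CertifiedBelow (c + n) cnt' :=
  h.of_scanChunks (fun _ ↦ isTwinIndex_of_testBit_twinBits (by omega) (by omega)) hscan

theorem certifiedBelow_four : CertifiedBelow 4 144 where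
  le_count := by
    have hcount :
        144 ≤ Nat.count (fun k ↦ isOddPrime (6 * k - 1) ∧ isOddPrime (6 * k + 1)) 1024 := by
      decide +kernel
    refine hcount.trans (Nat.count_mono_left fun k hk h ↦ ?_)
    exact ⟨((isOddPrime_iff (by omega)).mp h.1).1, ((isOddPrime_iff (by omega)).mp h.2).1⟩
  lt_count i hi hi4 := by omega

theorem certifiedBelow_21846 : CertifiedBelow 21846 168623 := by
  have h2052 : CertifiedBelow 2052 21847 :=
    certifiedBelow_four.extend (n := 2048) (by simp) (by simp) (by decide +kernel)
  have h4100 : CertifiedBelow 4100 39564 :=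
    h2052.extend (n := 2048) (by simp) (by simp) (by decide +kernel)
  have h6148 : CertifiedBelow 6148 56132 :=
    h4100.extend (n := 2048) (by simp) (by simp) (by decide +kernel)
  have h8196 : CertifiedBelow 8196 71899 :=
    h6148.extend (n := 2048) (by simp) (by simp) (by decide +kernel)
  have h10244 : CertifiedBelow 10244 87262 :=
    h8196.extend (n := 2048) (by simp) (by simp) (by decide +kernel)
  have h12292 : CertifiedBelow 12292 102250 :=
    h10244.extend (n := 2048) (by simp) (by simp) (by decide +kernel)
  have h14340 : CertifiedBelow 14340 116816 :=
    h12292.extend (n := 2048) (by simp) (by simp) (by decide +kernel)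
  have h16388 : CertifiedBelow 16388 131282 :=
    h14340.extend (n := 2048) (by simp) (by simp) (by decide +kernel)
  have h18436 : CertifiedBelow 18436 145329 :=
    h16388.extend (n := 2048) (by simp) (by simp) (by decide +kernel)
  have h20484 : CertifiedBelow 20484 159418 :=
    h18436.extend (n := 2048) (by simp) (by simp) (by decide +kernel)
  exact h20484.extend (n := 1362) (by simp) (by simp) (by decide +kernel)

theorem d2_pos_of_lt_count {K X : ℕ} {x : ℝ} (hx : 2 ≤ x) (hKx : 6 * (K : ℝ) ≤ x) (hxX : x ≤ X)
    (hX : 64 ≤ X) (h : 13204 * liUpper X < 64 * 10 ^ 16 * Nat.count IsTwinIndex K) : 0 < d2 x := by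
  have hx1 : x ∈ Ioi 1 := one_lt_two.trans_le hx
  have hLi_nonneg : 0 ≤ Li2 x := by
    simpa [Li2] using monotoneOn_Li2 (mem_Ioi.mpr one_lt_two) hx1 hx
  have hLi_le : Li2 x ≤ Li2 X := monotoneOn_Li2 hx1 (hx1.trans_le hxX) hxX
  have hcount : (Nat.count IsTwinIndex K : ℝ) ≤ piTwin x :=
    Nat.cast_le.mpr (count_isTwinIndex_le_piTwin hKx)
  have hcert : (13204 * liUpper X : ℝ) < 64 * 10 ^ 16 * Nat.count IsTwinIndex K := by
    exact_mod_cast h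
  rw [d2, sub_pos]
  calc C2 * Li2 x ≤ 13204 / 10000 * Li2 x := mul_le_mul_of_nonneg_right C2_le hLi_nonneg
    _ < piTwin x := by linarith [Li2_le_liUpper hX]

theorem d2_pos {x : ℝ} (hx : 2 ^ 21 ≤ x) (hx' : x ≤ 2 ^ 25) : 0 < d2 x := by
  norm_num at hx hx'
  set i := ⌊x / 1536⌋₊
  have hle : (i : ℝ) ≤ x / 1536 := Nat.floor_le (by positivity)
  have hlt : x / 1536 < i + 1 := Nat.lt_floor_add_one _
  have hlower : 1365 ≤ i := Nat.le_floor (by norm_num; linarith)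
  have hupper : i < 21846 := (Nat.floor_lt (by positivity)).mpr (by norm_num; linarith)
  exact d2_pos_of_lt_count (by linarith) (by push_cast; linarith) (by push_cast; linarith)
    (by omega) (certifiedBelow_21846.lt_count i hlower hupper)

/-- `d₂` does not change sign on `[2^21, 2^25]`. -/
theorem d2_no_sign_change_21_25 :
    ∀ x y : ℝ, 2 ^ 21 ≤ x → x ≤ y → y ≤ 2 ^ 25 → d2 x * d2 y > 0 := by
  intro x y hx hxy hy
  exact mul_pos (d2_pos hx (hxy.trans hy)) (d2_pos (hx.trans hxy) hy)
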